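/- arXiv:2601.18511 — 2 statements merged into one kernel-verified Lean document; each statement's English description precedes it below -/
import Mathlib

section
/- (Depth-optimized PCMM identity) For every positive integer d, every integer ℓ ≥ 0, and all matrices A, B ∈ ℝ^{d×d} (indices modulo d), the product C = A·B satisfies τ^ℓ(C) = Σ_{k=0}^{d-1} (Rot_row^{-ℓ·k}(Rot_col^k(τ^ℓ(σ(A))))) ⊙ (Rot_row^k(τ^{ℓ+1}(B))), where τ^ℓ denotes the ℓ-fold iterate of τ and ⊙ the entrywise (Hadamard) product. -/
/-- Row rotation: `(RotRow k M) i j = M (i+k) j`, indices modulo `d`. -/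
def RotRow (d : ℕ) (k : ℤ) (M : Matrix (ZMod d) (ZMod d) ℝ) :
    Matrix (ZMod d) (ZMod d) ℝ :=
  fun i j => M (i + (k : ZMod d)) j

/-- Column rotation: `(RotCol k M) i j = M i (j+k)`, indices modulo `d`. -/
def RotCol (d : ℕ) (k : ℤ) (M : Matrix (ZMod d) (ZMod d) ℝ) :
    Matrix (ZMod d) (ZMod d) ℝ :=
  fun i j => M i (j + (k : ZMod d))

/-- The permutation `τ`: `(tau M) i j = M (i+j) j`, indices modulo `d`. -/
def tau (d : ℕ) (M : Matrix (ZMod d) (ZMod d) ℝ) :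
    Matrix (ZMod d) (ZMod d) ℝ :=
  fun i j => M (i + j) j

/-- The permutation `σ`: `(sigma M) i j = M i (i+j)`, indices modulo `d`. -/
def sigma (d : ℕ) (M : Matrix (ZMod d) (ZMod d) ℝ) :
    Matrix (ZMod d) (ZMod d) ℝ :=
  fun i j => M i (i + j)

/-! Entrywise, `τ^ℓ` replaces the row index `i` by `i + ℓ j`. In the `A` factor of the `k`-th
summand the column rotation moves `j` to `j + k`, which shifts the row by an extra `ℓ k`; the row
rotation by `-ℓ k` undoes exactly this. With `r = i + ℓ j` the `k`-th summand is therefore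
`A r (r + j + k) * B (r + j + k) j`, and `r + j + k` runs over all indices as `k` does. Only the
addition of indices enters, so they may come from any finite abelian group. -/

open scoped Matrix

section General

variable {G m n α : Type*}

/-- Rotation of the rows, as in `RotRow`, with row indices and shift `k` in an arbitrary additive
structure. -/
def rotateRows [Add G] (k : G) (M : Matrix G n α) : Matrix G n α :=
  Matrix.of fun i j => M (i + k) j

/-- Rotation of the columns, as in `RotCol`, with column indices and shift `k` in an arbitrary
additive structure. -/
def rotateCols [Add G] (k : G) (M : Matrix m G α) : Matrix m G α :=
  Matrix.of fun i j => M i (j + k)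

/-- The permutation `τ` of matrix entries, rotating the rows of column `j` by `j`, for indices in an
arbitrary additive structure. -/
def shearRows [Add G] (M : Matrix G G α) : Matrix G G α :=
  Matrix.of fun i j => M (i + j) j

/-- The permutation `σ` of matrix entries, rotating the columns of row `i` by `i`, for indices in an
arbitrary additive structure. -/
def shearCols [Add G] (M : Matrix G G α) : Matrix G G α :=
  Matrix.of fun i j => M i (i + j)

theorem shearRows_iterate_apply [AddMonoid G] (ℓ : ℕ) (M : Matrix G G α) (i j : G) :
    shearRows^[ℓ] M i j = M (i + ℓ • j) j := by
  induction ℓ generalizing M with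
  | zero => simp
  | succ ℓ ih =>
    calc shearRows^[ℓ + 1] M i j = shearRows M (i + ℓ • j) j := ih (shearRows M)
      _ = M (i + (ℓ + 1) • j) j := by rw [shearRows, Matrix.of_apply, add_assoc, succ_nsmul]

theorem rotateRows_rotateCols_shearRows_iterate_apply [AddCommGroup G] (ℓ : ℕ) (k : G)
    (M : Matrix G G α) (i j : G) :
    rotateRows (-(ℓ • k)) (rotateCols k (shearRows^[ℓ] M)) i j = M (i + ℓ • j) (j + k) := by
  have row_eq : i + -(ℓ • k) + ℓ • (j + k) = i + ℓ • j := by rw [nsmul_add]; abel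
  simp only [rotateRows, rotateCols, Matrix.of_apply, shearRows_iterate_apply, row_eq]

theorem rotateRows_shearRows_iterate_succ_apply [AddCommMonoid G] (ℓ : ℕ) (k : G)
    (M : Matrix G G α) (i j : G) :
    rotateRows k (shearRows^[ℓ + 1] M) i j = M (i + ℓ • j + (j + k)) j := by
  have row_eq : i + k + (ℓ + 1) • j = i + ℓ • j + (j + k) := by rw [succ_nsmul]; abel
  simp only [rotateRows, Matrix.of_apply, shearRows_iterate_apply, row_eq]

theorem matrix_mul_apply_eq_sum_add_left [AddGroup G] [Fintype G] [Mul α] [AddCommMonoid α]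
    (A : Matrix m G α) (B : Matrix G n α) (g : G) (i : m) (j : n) :
    (A * B) i j = ∑ k, A i (g + k) * B (g + k) j := by
  rw [Matrix.mul_apply]
  exact (Equiv.sum_comp (Equiv.addLeft g) fun k => A i k * B k j).symm

theorem depth_optimized_pcmm_general [AddCommGroup G] [Fintype G] [Mul α] [AddCommMonoid α]
    (ℓ : ℕ) (A B : Matrix G G α) :
    shearRows^[ℓ] (A * B) =
      ∑ k, rotateRows (-(ℓ • k)) (rotateCols k (shearRows^[ℓ] (shearCols A))) ⊙
        rotateRows k (shearRows^[ℓ + 1] B) := by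
  ext i j
  rw [shearRows_iterate_apply, matrix_mul_apply_eq_sum_add_left A B (i + ℓ • j + j),
    Matrix.sum_apply]
  refine Finset.sum_congr rfl fun k _ => ?_
  rw [Matrix.hadamard_apply, rotateRows_rotateCols_shearRows_iterate_apply,
    rotateRows_shearRows_iterate_succ_apply, shearCols, Matrix.of_apply, add_assoc _ j k]

end General

theorem sum_range_natCast_zmod {β : Type*} [AddCommMonoid β] (d : ℕ) [NeZero d]
    (f : ZMod d → β) : ∑ k ∈ Finset.range d, f k = ∑ x, f x :=
  Finset.sum_nbij' (fun k => (k : ZMod d)) ZMod.val (fun _ _ => Finset.mem_univ _)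
    (fun x _ => Finset.mem_range.2 x.val_lt)
    (fun _ hk => ZMod.val_cast_of_lt (Finset.mem_range.1 hk))
    (fun x _ => x.natCast_zmod_val) fun _ _ => rfl

theorem rotRow_eq_rotateRows (d : ℕ) (k : ℤ) : RotRow d k = rotateRows (k : ZMod d) := rfl

theorem rotCol_eq_rotateCols (d : ℕ) (k : ℤ) : RotCol d k = rotateCols (k : ZMod d) := rfl

theorem tau_eq_shearRows (d : ℕ) : tau d = shearRows := rfl

theorem sigma_eq_shearCols (d : ℕ) : sigma d = shearCols := rfl

/-- The depth-optimized PCMM identity: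
`τ^ℓ(A·B) = Σ_{k=0}^{d-1} Rot_row^{-ℓk}(Rot_col^k(τ^ℓ(σ(A)))) ⊙ Rot_row^k(τ^{ℓ+1}(B))`. -/
theorem depth_optimized_pcmm (d : ℕ) [NeZero d] (ℓ : ℕ)
    (A B : Matrix (ZMod d) (ZMod d) ℝ) :
    (tau d)^[ℓ] (A * B) = ∑ k ∈ Finset.range d,
      Matrix.hadamard
        (RotRow d (-((ℓ : ℤ) * k)) (RotCol d (k : ℤ) ((tau d)^[ℓ] (sigma d A))))
        (RotRow d (k : ℤ) ((tau d)^[ℓ + 1] B)) := by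
  simpa only [rotRow_eq_rotateRows, rotCol_eq_rotateCols, tau_eq_shearRows, sigma_eq_shearCols,
    Int.cast_neg, Int.cast_mul, Int.cast_natCast, nsmul_eq_mul, ← sum_range_natCast_zmod]
    using depth_optimized_pcmm_general ℓ A B
end

section
/- Every polynomial P ∈ ℝ[X] taking only non-negative values on ℝ (i.e. P(x) ≥ 0 for all x ∈ ℝ) can be written as a sum of two squares of real polynomials: there exist U, V ∈ ℝ[X] with P = U² + V². -/
open Polynomial

/-!
A non-constant `P` has a complex root `a + bi`, and then `(X - a)² + b²` divides `P`: for `b ≠ 0`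
because the conjugate is a root too, and for `b = 0` because `P` has a minimum at its root `a`,
which is therefore a double root. The quotient is again non-negative, so by induction on the
degree it is a sum of two squares, and such sums are closed under multiplication.
-/

open scoped Topology in
lemma dense_compl_setOf_isRoot {R : Type*} [CommRing R] [IsDomain R] [TopologicalSpace R]
    [T1Space R] [∀ x : R, (𝓝[≠] x).NeBot] {p : R[X]} (hp : p ≠ 0) :
    Dense {x | p.IsRoot x}ᶜ := by
  rw [Set.compl_eq_univ_sdiff]
  exact dense_univ.sdiff_finite (finite_setOfPred_isRoot hp)

lemma eval_nonneg_of_eval_mul_nonneg {K : Type*} [Field K] [LinearOrder K]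
    [IsStrictOrderedRing K] [TopologicalSpace K] [OrderTopology K] {p q : K[X]} (hp₀ : p ≠ 0)
    (hp : ∀ x, 0 ≤ p.eval x) (hpq : ∀ x, 0 ≤ (p * q).eval x) (x : K) : 0 ≤ q.eval x := by
  have hclosed : IsClosed {x | 0 ≤ q.eval x} := isClosed_le continuous_const q.continuous
  refine (dense_compl_setOf_isRoot hp₀).induction (fun y hy ↦ ?_) hclosed x
  have hpos : 0 < p.eval y := (hp y).lt_of_ne' hy
  have hmul : 0 ≤ p.eval y * q.eval y := by simpa only [eval_mul] using hpq y
  exact nonneg_of_mul_nonneg_right hmul hpos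

lemma X_sub_C_sq_dvd_of_isLocalExtr {p : ℝ[X]} {a : ℝ} (hroot : p.IsRoot a)
    (hextr : IsLocalExtr (fun x ↦ p.eval x) a) : (X - C a) ^ 2 ∣ p := by
  rcases eq_or_ne p 0 with rfl | hp
  · exact dvd_zero _
  have hderiv : p.derivative.IsRoot a := by
    simpa only [IsRoot.def, Polynomial.deriv] using hextr.deriv_eq_zero
  exact (le_rootMultiplicity_iff hp).mp
    ((one_lt_rootMultiplicity_iff_isRoot hp).mpr ⟨hroot, hderiv⟩)

lemma X_sub_C_re_sq_add_C_im_sq_dvd_of_aeval_eq_zero {p : ℝ[X]} (hp : ∀ x, 0 ≤ p.eval x) {z : ℂ}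
    (hz : aeval z p = 0) : (X - C z.re) ^ 2 + C z.im ^ 2 ∣ p := by
  by_cases him : z.im = 0
  · lift z to ℝ using him
    have hroot : p.IsRoot z := by
      simpa using (aeval_algebraMap_apply ℂ z p).symm.trans hz
    have hmin : IsLocalMin (fun x ↦ p.eval x) z :=
      .of_forall fun x ↦ hroot.le.trans (hp x)
    simpa using X_sub_C_sq_dvd_of_isLocalExtr hroot (.inl hmin)
  · convert p.quadratic_dvd_of_aeval_eq_zero_im_ne_zero hz him using 1
    rw [Complex.sq_norm, Complex.normSq_apply]
    simp only [map_mul, map_add, C_ofNat]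
    ring

lemma monic_X_sub_C_sq_add_C_sq {R : Type*} [CommRing R] (a b : R) :
    ((X - C a) ^ 2 + C b ^ 2).Monic := by
  nontriviality R
  monicity!

lemma natDegree_X_sub_C_sq_add_C_sq {R : Type*} [CommRing R] [Nontrivial R] (a b : R) :
    ((X - C a) ^ 2 + C b ^ 2).natDegree = 2 := by
  compute_degree!

lemma exists_eq_X_sub_C_sq_add_C_sq_mul_of_eval_nonneg {p : ℝ[X]} (hp : ∀ x, 0 ≤ p.eval x)
    (hdeg : p.natDegree ≠ 0) :
    ∃ (a b : ℝ) (q : ℝ[X]), p = ((X - C a) ^ 2 + C b ^ 2) * q ∧ ∀ x, 0 ≤ q.eval x := by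
  obtain ⟨z, hz⟩ : ∃ z : ℂ, aeval z p = 0 :=
    IsAlgClosed.exists_aeval_eq_zero ℂ p (mt natDegree_eq_of_degree_eq_some hdeg)
  obtain ⟨q, rfl⟩ := X_sub_C_re_sq_add_C_im_sq_dvd_of_aeval_eq_zero hp hz
  have hfactor (x : ℝ) : 0 ≤ ((X - C z.re) ^ 2 + C z.im ^ 2).eval x := by
    simp only [eval_add, eval_pow, eval_sub, eval_X, eval_C]
    positivity
  exact ⟨z.re, z.im, q, rfl,
    eval_nonneg_of_eval_mul_nonneg (monic_X_sub_C_sq_add_C_sq _ _).ne_zero hfactor hp⟩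

/-- Every real polynomial taking only non-negative values on `ℝ` is a sum of
two squares of real polynomials. -/
theorem nonneg_poly_sum_two_squares (P : Polynomial ℝ)
    (h : ∀ x : ℝ, 0 ≤ P.eval x) :
    ∃ U V : Polynomial ℝ, P = U ^ 2 + V ^ 2 := by
  induction hn : P.natDegree using Nat.strong_induction_on generalizing P with
  | _ n ih =>
  by_cases hconst : P.natDegree = 0
  · obtain ⟨c, rfl⟩ := natDegree_eq_zero.mp hconst
    have hc : 0 ≤ c := by simpa using h 0
    exact ⟨C √c, 0, by simp [← C_pow, Real.sq_sqrt hc]⟩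
  obtain ⟨a, b, Q, rfl, hQ⟩ := exists_eq_X_sub_C_sq_add_C_sq_mul_of_eval_nonneg h hconst
  have hdeg : Q.natDegree < n := by
    have hQ₀ : Q ≠ 0 := by rintro rfl; simp at hconst
    rw [← hn, (monic_X_sub_C_sq_add_C_sq a b).natDegree_mul' hQ₀, natDegree_X_sub_C_sq_add_C_sq]
    lia
  obtain ⟨U, V, hUV⟩ := ih _ hdeg Q hQ rfl
  exact sq_add_sq_mul rfl hUV
end
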